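/- arXiv:1909.06648 — 4 statements merged into one kernel-verified Lean document; each statement's English description precedes it below -/
import Mathlib

section
/- Let C be a copula and let r = ρ(C) be its Spearman's rho. Then for all (u,v) ∈ [0,1]²: if −1 ≤ r ≤ −5/9 then |C(u,v) − C(v,u)| ≤ ((1+r)/12)^{1/3}; if −5/9 ≤ r ≤ −1/3 then |C(u,v) − C(v,u)| ≤ 1/3; and if −1/3 ≤ r ≤ 1 then |C(u,v) − C(v,u)| ≤ ((1−r)/36)^{1/3}. -/
open Set MeasureTheory intervalIntegral

/-- A bivariate copula: boundary conditions plus the 2-increasing property. -/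
def IsCopula (C : ℝ → ℝ → ℝ) : Prop :=
  (∀ u ∈ Set.Icc (0:ℝ) 1, C u 0 = 0 ∧ C 0 u = 0 ∧ C u 1 = u ∧ C 1 u = u) ∧
  ∀ u₁ u₂ v₁ v₂ : ℝ, 0 ≤ u₁ → u₁ ≤ u₂ → u₂ ≤ 1 → 0 ≤ v₁ → v₁ ≤ v₂ → v₂ ≤ 1 →
    0 ≤ C u₂ v₂ - C u₂ v₁ - C u₁ v₂ + C u₁ v₁

/-- The lower bound function C̲^{(a,b)}_c. -/
noncomputable def lowerC (a b c : ℝ) : ℝ → ℝ → ℝ := fun u v =>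
  max (max (u + v - 1) 0)
    (min (min (max (a + b - 1) 0 + c) (u - a + (max (a + b - 1) 0 + c)))
      (min (v - b + (max (a + b - 1) 0 + c)) (u + v - a - b + (max (a + b - 1) 0 + c))))

/-- The upper bound function C̄^{(a,b)}_c. -/
noncomputable def upperC (a b c : ℝ) : ℝ → ℝ → ℝ := fun u v =>
  min (min u v)
    (max (max (min a b - c) (u - b + (min a b - c)))
      (max (v - a + (min a b - c)) (u + v - a - b + (min a b - c))))

/-- Spearman's rho of a copula. -/
noncomputable def spearmanRho (C : ℝ → ℝ → ℝ) : ℝ :=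
  12 * (∫ u in (0:ℝ)..1, ∫ v in (0:ℝ)..1, C u v) - 3

/-- Spearman's footrule of a copula. -/
noncomputable def spearmanFootrule (C : ℝ → ℝ → ℝ) : ℝ :=
  6 * (∫ u in (0:ℝ)..1, C u u) - 2

/-- Gini's gamma of a copula. -/
noncomputable def giniGamma (C : ℝ → ℝ → ℝ) : ℝ :=
  4 * (∫ u in (0:ℝ)..1, (C u u + C u (1 - u))) - 2

/-- Blomqvist's beta of a copula. -/
noncomputable def blomqvistBeta (C : ℝ → ℝ → ℝ) : ℝ :=
  4 * C (1/2) (1/2) - 1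

/-!
Let `Q` be nondecreasing and `1`-Lipschitz in each variable, with the boundary values of a copula.
If `Q p q = t`, then `Q u v ≤ t + (u - p)⁺ + (v - q)⁺`, and integrating the resulting gap below the
Fréchet–Hoeffding bound `min u v` over the unit square gives
`6 (p - t) (q - t) (p + q - 2 t) ≤ 1 - ρ(Q)`. Reflecting `Q` to `(u, v) ↦ v - Q (1 - u) v` reverses
the sign of `ρ` and turns this into `6 t (1 - p - q + t) (1 - p - q + 2 t) ≤ 1 + ρ(Q)`.

By symmetry let `d = Q q p - Q p q ≥ 0`. Then `d` is at most `p`, `q`, `1 - p`, `1 - q` and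
`|p - q|`, whence `d ≤ 1 / 3`. Moreover, with `t = Q p q` the factors of the first product are at
least `d` and `2 d` (in some order) and `3 d`, so that `36 d ^ 3 ≤ 1 - ρ(Q)`; at the point `(q, p)`,
with `t = Q q p`, the factors of the second are at least `d`, `d` and `2 d`, so that
`12 d ^ 3 ≤ 1 + ρ(Q)`.
-/

section RealFunctions

variable {f : ℝ → ℝ} {a b : ℝ}

theorem lipschitzOnWith_one_of_monotoneOn {s : Set ℝ} (hf : MonotoneOn f s)
    (h : ∀ x ∈ s, ∀ y ∈ s, x ≤ y → f y - f x ≤ y - x) : LipschitzOnWith 1 f s :=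
  LipschitzOnWith.of_le_add fun x hx y hy => by
    rcases le_total x y with hxy | hyx
    · exact (hf hx hy hxy).trans (le_add_of_nonneg_right dist_nonneg)
    · linarith [h y hy x hx hyx, Real.dist_eq x y, le_abs_self (x - y)]

theorem mul_midpoint_le_integral_of_affine_le (hab : a ≤ b) (hf : IntervalIntegrable f volume a b)
    {m k : ℝ} (h : ∀ x ∈ Icc a b, m * x + k ≤ f x) :
    (b - a) * (m * ((a + b) / 2) + k) ≤ ∫ x in a..b, f x := by
  have hcont : Continuous fun x : ℝ => m * x := by fun_prop
  calc (b - a) * (m * ((a + b) / 2) + k) = ∫ x in a..b, (m * x + k) := by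
        rw [intervalIntegral.integral_add (hcont.intervalIntegrable _ _) intervalIntegrable_const,
          intervalIntegral.integral_const_mul, integral_id, intervalIntegral.integral_const,
          smul_eq_mul]
        ring
    _ ≤ ∫ x in a..b, f x := integral_mono_on hab
        ((by fun_prop : Continuous fun x : ℝ => m * x + k).intervalIntegrable _ _) hf h

theorem integral_subinterval_le_integral {α β : ℝ} (hf : IntervalIntegrable f volume a b)
    (hf0 : ∀ x ∈ Icc a b, 0 ≤ f x) (hα : a ≤ α) (hαβ : α ≤ β) (hβ : β ≤ b) :
    ∫ x in α..β, f x ≤ ∫ x in a..b, f x :=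
  integral_mono_interval hα hαβ hβ
    (ae_restrict_of_forall_mem measurableSet_Ioc fun x hx => hf0 x (Ioc_subset_Icc_self hx)) hf

theorem trapezoid_area_le_integral {α β h : ℝ} (hf : IntervalIntegrable f volume a b)
    (hf0 : ∀ x ∈ Icc a b, 0 ≤ f x) (hα : a ≤ α) (hβ : β ≤ b) (hh : 0 ≤ h) (hαβ : 2 * h ≤ β - α)
    (H : ∀ x ∈ Icc α β, min h (min (x - α) (β - x)) ≤ f x) :
    h * (β - α - h) ≤ ∫ x in a..b, f x := by
  have hsub : ∀ {c d : ℝ}, α ≤ c → c ≤ d → d ≤ β → IntervalIntegrable f volume c d :=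
    fun hc hcd hd => hf.mono_set <| by
      rw [uIcc_of_le hcd, uIcc_of_le (by linarith)]
      exact Icc_subset_Icc (hα.trans hc) (hd.trans hβ)
  have hi₁ := hsub (c := α) (d := α + h) le_rfl (by linarith) (by linarith)
  have hi₂ := hsub (c := α + h) (d := β - h) (by linarith) (by linarith) (by linarith)
  have hi₃ := hsub (c := β - h) (d := β) (by linarith) (by linarith) le_rfl
  have rising := mul_midpoint_le_integral_of_affine_le (m := 1) (k := -α) (by linarith) hi₁
    fun x hx => le_trans (by grind) (H x (by grind))
  have top := mul_midpoint_le_integral_of_affine_le (m := 0) (k := h) (by linarith) hi₂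
    fun x hx => le_trans (by grind) (H x (by grind))
  have falling := mul_midpoint_le_integral_of_affine_le (m := -1) (k := β) (by linarith) hi₃
    fun x hx => le_trans (by grind) (H x (by grind))
  have hsplit : ∫ x in α..β, f x = (∫ x in α..(α + h), f x) + (∫ x in (α + h)..(β - h), f x) +
      ∫ x in (β - h)..β, f x := by
    rw [integral_add_adjacent_intervals hi₁ hi₂,
      integral_add_adjacent_intervals (hi₁.trans hi₂) hi₃]
  calc h * (β - α - h) ≤ ∫ x in α..β, f x := by linarith
    _ ≤ ∫ x in a..b, f x := integral_subinterval_le_integral hf hf0 hα (by linarith) hβ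

theorem integral_min_of_mem_Icc {u : ℝ} (hu : u ∈ Icc a b) :
    ∫ v in a..b, min u v = (u ^ 2 - a ^ 2) / 2 + (b - u) * u := by
  have hi : ∀ c d, IntervalIntegrable (fun v => min u v) volume c d :=
    fun c d => (by fun_prop : Continuous fun v => min u v).intervalIntegrable c d
  have below : ∫ v in a..u, min u v = ∫ v in a..u, v :=
    integral_congr fun v hv => min_eq_right (by rw [uIcc_of_le hu.1] at hv; exact hv.2)
  have above : ∫ v in u..b, min u v = ∫ _ in u..b, u :=
    integral_congr fun v hv => min_eq_left (by rw [uIcc_of_le hu.2] at hv; exact hv.1)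
  rw [← integral_add_adjacent_intervals (hi a u) (hi u b), below, above, integral_id,
    intervalIntegral.integral_const, smul_eq_mul]

theorem le_rpow_one_div_of_pow_le {x y : ℝ} {n : ℕ} (hn : n ≠ 0) (hx : 0 ≤ x) (h : x ^ n ≤ y) :
    x ≤ y ^ (1 / (n : ℝ)) := by
  rwa [one_div, Real.le_rpow_inv_iff_of_pos hx ((pow_nonneg hx n).trans h) (by positivity),
    Real.rpow_natCast]

end RealFunctions

/-- A quasi-copula: the boundary values of a copula, with the 2-increasing property weakened to
being nondecreasing and `1`-Lipschitz in each variable on the unit interval. -/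
structure IsQuasiCopula (Q : ℝ → ℝ → ℝ) : Prop where
  zero_left : ∀ v ∈ Icc (0 : ℝ) 1, Q 0 v = 0
  zero_right : ∀ u ∈ Icc (0 : ℝ) 1, Q u 0 = 0
  one_left : ∀ v ∈ Icc (0 : ℝ) 1, Q 1 v = v
  one_right : ∀ u ∈ Icc (0 : ℝ) 1, Q u 1 = u
  monotoneOn_left : ∀ v ∈ Icc (0 : ℝ) 1, MonotoneOn (fun u => Q u v) (Icc 0 1)
  monotoneOn_right : ∀ u ∈ Icc (0 : ℝ) 1, MonotoneOn (Q u) (Icc 0 1)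
  lipschitzOn_left : ∀ v ∈ Icc (0 : ℝ) 1, LipschitzOnWith 1 (fun u => Q u v) (Icc 0 1)
  lipschitzOn_right : ∀ u ∈ Icc (0 : ℝ) 1, LipschitzOnWith 1 (Q u) (Icc 0 1)

namespace IsCopula

variable {C : ℝ → ℝ → ℝ}

theorem swap (hC : IsCopula C) : IsCopula (Function.swap C) :=
  ⟨fun u hu => ⟨(hC.1 u hu).2.1, (hC.1 u hu).1, (hC.1 u hu).2.2.2, (hC.1 u hu).2.2.1⟩,
    fun u₁ u₂ v₁ v₂ hu₁ hu hu₂ hv₁ hv hv₂ => by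
      linarith [hC.2 v₁ v₂ u₁ u₂ hv₁ hv hv₂ hu₁ hu hu₂]⟩

theorem monotoneOn_left (hC : IsCopula C) {v : ℝ} (hv : v ∈ Icc (0 : ℝ) 1) :
    MonotoneOn (fun u => C u v) (Icc 0 1) := fun u hu u' hu' huu' => by
  linarith [hC.2 u u' 0 v hu.1 huu' hu'.2 le_rfl hv.1 hv.2, (hC.1 u hu).1, (hC.1 u' hu').1]

theorem lipschitzOn_left (hC : IsCopula C) {v : ℝ} (hv : v ∈ Icc (0 : ℝ) 1) :
    LipschitzOnWith 1 (fun u => C u v) (Icc 0 1) :=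
  lipschitzOnWith_one_of_monotoneOn (hC.monotoneOn_left hv) fun u hu u' hu' huu' => by
    linarith [hC.2 u u' v 1 hu.1 huu' hu'.2 hv.1 hv.2 le_rfl, (hC.1 u hu).2.2.1,
      (hC.1 u' hu').2.2.1]

theorem isQuasiCopula (hC : IsCopula C) : IsQuasiCopula C where
  zero_left v hv := (hC.1 v hv).2.1
  zero_right u hu := (hC.1 u hu).1
  one_left v hv := (hC.1 v hv).2.2.2
  one_right u hu := (hC.1 u hu).2.2.1
  monotoneOn_left _ := hC.monotoneOn_left
  monotoneOn_right _ := hC.swap.monotoneOn_left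
  lipschitzOn_left _ := hC.lipschitzOn_left
  lipschitzOn_right _ := hC.swap.lipschitzOn_left

end IsCopula

/-- The reflection of a bivariate function in its first variable: if `Q` is the distribution
function of `(U, V)` with uniform margins, this is the distribution function of `(1 - U, V)`. -/
def reflectFst (Q : ℝ → ℝ → ℝ) (u v : ℝ) : ℝ := v - Q (1 - u) v

/-- The gap of `Q` below the Fréchet–Hoeffding upper bound `min u v`. -/
noncomputable def frechetGap (Q : ℝ → ℝ → ℝ) (u v : ℝ) : ℝ := min u v - Q u v

namespace IsQuasiCopula

variable {Q : ℝ → ℝ → ℝ} {p q u v : ℝ}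

theorem swap (hQ : IsQuasiCopula Q) : IsQuasiCopula (Function.swap Q) where
  zero_left := hQ.zero_right
  zero_right := hQ.zero_left
  one_left := hQ.one_right
  one_right := hQ.one_left
  monotoneOn_left := hQ.monotoneOn_right
  monotoneOn_right := hQ.monotoneOn_left
  lipschitzOn_left := hQ.lipschitzOn_right
  lipschitzOn_right := hQ.lipschitzOn_left

theorem apply_le_add_max_left (hQ : IsQuasiCopula Q) (hp : p ∈ Icc (0 : ℝ) 1)
    (hu : u ∈ Icc (0 : ℝ) 1) (hv : v ∈ Icc (0 : ℝ) 1) : Q u v ≤ Q p v + max (u - p) 0 := by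
  rcases le_total u p with hup | hpu
  · linarith [hQ.monotoneOn_left v hv hu hp hup, le_max_right (u - p) 0]
  · have := (hQ.lipschitzOn_left v hv).le_add_mul hu hp
    rw [Real.dist_eq, abs_of_nonneg (sub_nonneg.2 hpu), NNReal.coe_one, one_mul] at this
    linarith [le_max_left (u - p) 0]

theorem apply_le_add_max (hQ : IsQuasiCopula Q) (hp : p ∈ Icc (0 : ℝ) 1)
    (hq : q ∈ Icc (0 : ℝ) 1) (hu : u ∈ Icc (0 : ℝ) 1) (hv : v ∈ Icc (0 : ℝ) 1) :
    Q u v ≤ Q p q + max (u - p) 0 + max (v - q) 0 := by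
  linarith [hQ.apply_le_add_max_left hp hu hv, hQ.swap.apply_le_add_max_left hq hv hp]

theorem apply_sub_apply_le (hQ : IsQuasiCopula Q) (hp : p ∈ Icc (0 : ℝ) 1)
    (hu : u ∈ Icc (0 : ℝ) 1) (hv : v ∈ Icc (0 : ℝ) 1) (hpu : p ≤ u) :
    Q u v - Q p v ≤ u - p := by
  linarith [hQ.apply_le_add_max_left hp hu hv, max_eq_left (sub_nonneg.2 hpu)]

theorem nonneg (hQ : IsQuasiCopula Q) (hu : u ∈ Icc (0 : ℝ) 1) (hv : v ∈ Icc (0 : ℝ) 1) :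
    0 ≤ Q u v :=
  hQ.zero_left v hv ▸ hQ.monotoneOn_left v hv (by simp) hu hu.1

theorem le_right (hQ : IsQuasiCopula Q) (hu : u ∈ Icc (0 : ℝ) 1) (hv : v ∈ Icc (0 : ℝ) 1) :
    Q u v ≤ v :=
  (hQ.monotoneOn_left v hv hu (by simp) hu.2).trans_eq (hQ.one_left v hv)

theorem le_left (hQ : IsQuasiCopula Q) (hu : u ∈ Icc (0 : ℝ) 1) (hv : v ∈ Icc (0 : ℝ) 1) :
    Q u v ≤ u :=
  hQ.swap.le_right hv hu

theorem add_sub_one_le (hQ : IsQuasiCopula Q) (hu : u ∈ Icc (0 : ℝ) 1)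
    (hv : v ∈ Icc (0 : ℝ) 1) : u + v - 1 ≤ Q u v := by
  linarith [hQ.apply_sub_apply_le hu (by simp) hv hu.2, hQ.one_left v hv]

protected theorem reflectFst (hQ : IsQuasiCopula Q) : IsQuasiCopula (reflectFst Q) := by
  have hmono_left : ∀ v ∈ Icc (0 : ℝ) 1, MonotoneOn (fun u => reflectFst Q u v) (Icc 0 1) :=
    fun v hv u hu u' hu' huu' => sub_le_sub_left
      (hQ.monotoneOn_left v hv (Icc.one_sub_mem hu') (Icc.one_sub_mem hu) (by linarith)) v
  have hmono_right : ∀ u ∈ Icc (0 : ℝ) 1, MonotoneOn (reflectFst Q u) (Icc 0 1) :=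
    fun u hu v hv v' hv' hvv' => by
      have : Q (1 - u) v' - Q (1 - u) v ≤ v' - v :=
        hQ.swap.apply_sub_apply_le hv hv' (Icc.one_sub_mem hu) hvv'
      simp only [reflectFst]
      linarith
  exact {
    zero_left v hv := by simp [reflectFst, hQ.one_left v hv]
    zero_right u hu := by simp [reflectFst, hQ.zero_right _ (Icc.one_sub_mem hu)]
    one_left v hv := by simp [reflectFst, hQ.zero_left v hv]
    one_right u hu := by simp [reflectFst, hQ.one_right _ (Icc.one_sub_mem hu)]
    monotoneOn_left := hmono_left
    monotoneOn_right := hmono_right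
    lipschitzOn_left v hv := lipschitzOnWith_one_of_monotoneOn (hmono_left v hv)
      fun u hu u' hu' huu' => by
        have := hQ.apply_sub_apply_le (Icc.one_sub_mem hu') (Icc.one_sub_mem hu) hv (by linarith)
        simp only [reflectFst]
        linarith
    lipschitzOn_right u hu := lipschitzOnWith_one_of_monotoneOn (hmono_right u hu)
      fun v hv v' hv' hvv' => by
        have := hQ.monotoneOn_right _ (Icc.one_sub_mem hu) hv hv' hvv'
        simp only [reflectFst]
        linarith }

theorem continuousOn_uncurry (hQ : IsQuasiCopula Q) :
    ContinuousOn (Function.uncurry Q) (Icc 0 1 ×ˢ Icc 0 1) :=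
  continuousOn_prod_of_continuousOn_lipschitzOnWith _ 1
    (fun u hu => (hQ.lipschitzOn_right u hu).continuousOn) hQ.lipschitzOn_left

theorem intervalIntegrable_right (hQ : IsQuasiCopula Q) (hu : u ∈ Icc (0 : ℝ) 1) :
    IntervalIntegrable (Q u) volume 0 1 :=
  (hQ.lipschitzOn_right u hu).continuousOn.intervalIntegrable_of_Icc zero_le_one

theorem intervalIntegrable_integral (hQ : IsQuasiCopula Q) :
    IntervalIntegrable (fun u => ∫ v in (0 : ℝ)..1, Q u v) volume 0 1 := by
  refine MonotoneOn.intervalIntegrable ?_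
  rw [uIcc_of_le zero_le_one]
  exact fun u hu u' hu' huu' => integral_mono_on zero_le_one (hQ.intervalIntegrable_right hu)
    (hQ.intervalIntegrable_right hu') fun v hv => hQ.monotoneOn_left v hv hu hu' huu'

theorem spearmanRho_swap (hQ : IsQuasiCopula Q) :
    spearmanRho (Function.swap Q) = spearmanRho Q := by
  have hint : IntegrableOn (Function.uncurry Q) (uIoc 0 1 ×ˢ uIoc 0 1) := by
    rw [uIoc_of_le zero_le_one]
    exact (hQ.continuousOn_uncurry.integrableOn_compact (isCompact_Icc.prod isCompact_Icc)).mono_set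
      (prod_mono Ioc_subset_Icc_self Ioc_subset_Icc_self)
  simp only [spearmanRho, Function.swap, intervalIntegral_intervalIntegral_swap hint]

theorem spearmanRho_reflectFst (hQ : IsQuasiCopula Q) :
    spearmanRho (reflectFst Q) = -spearmanRho Q := by
  have inner : ∀ u ∈ Icc (0 : ℝ) 1, ∫ v in (0 : ℝ)..1, reflectFst Q u v =
      1 / 2 - ∫ v in (0 : ℝ)..1, Q (1 - u) v := fun u hu => by
    simp only [reflectFst]
    rw [intervalIntegral.integral_sub intervalIntegrable_id
      (hQ.intervalIntegrable_right (Icc.one_sub_mem hu)), integral_id]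
    norm_num
  have outer : ∫ u in (0 : ℝ)..1, ∫ v in (0 : ℝ)..1, reflectFst Q u v =
      1 / 2 - ∫ u in (0 : ℝ)..1, ∫ v in (0 : ℝ)..1, Q u v := by
    rw [integral_congr fun u hu => inner u (by rwa [uIcc_of_le zero_le_one] at hu),
      intervalIntegral.integral_sub intervalIntegrable_const
        (by simpa using (hQ.intervalIntegrable_integral.comp_sub_left 1).symm),
      intervalIntegral.integral_comp_sub_left (fun u => ∫ v in (0 : ℝ)..1, Q u v) 1]
    simp
  rw [spearmanRho, spearmanRho, outer]
  ring

theorem frechetGap_nonneg (hQ : IsQuasiCopula Q) (hu : u ∈ Icc (0 : ℝ) 1)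
    (hv : v ∈ Icc (0 : ℝ) 1) : 0 ≤ frechetGap Q u v :=
  sub_nonneg.2 (le_min (hQ.le_left hu hv) (hQ.le_right hu hv))

theorem le_frechetGap (hQ : IsQuasiCopula Q) (hp : p ∈ Icc (0 : ℝ) 1) (hq : q ∈ Icc (0 : ℝ) 1)
    (hu : u ∈ Icc (0 : ℝ) 1) (hv : v ∈ Icc (0 : ℝ) 1) :
    min u v - Q p q - max (u - p) 0 - max (v - q) 0 ≤ frechetGap Q u v := by
  rw [frechetGap]
  linarith [hQ.apply_le_add_max hp hq hu hv]

theorem intervalIntegrable_frechetGap (hQ : IsQuasiCopula Q) (hu : u ∈ Icc (0 : ℝ) 1) :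
    IntervalIntegrable (frechetGap Q u) volume 0 1 :=
  ((by fun_prop : Continuous fun v => min u v).intervalIntegrable 0 1).sub
    (hQ.intervalIntegrable_right hu)

theorem integral_frechetGap (hQ : IsQuasiCopula Q) (hu : u ∈ Icc (0 : ℝ) 1) :
    ∫ v in (0 : ℝ)..1, frechetGap Q u v = u - u ^ 2 / 2 - ∫ v in (0 : ℝ)..1, Q u v := by
  simp only [frechetGap]
  rw [intervalIntegral.integral_sub
    ((by fun_prop : Continuous fun v => min u v).intervalIntegrable 0 1)
    (hQ.intervalIntegrable_right hu), integral_min_of_mem_Icc hu]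
  ring

theorem intervalIntegrable_integral_frechetGap (hQ : IsQuasiCopula Q) :
    IntervalIntegrable (fun u => ∫ v in (0 : ℝ)..1, frechetGap Q u v) volume 0 1 := by
  have hcont : Continuous fun u : ℝ => u - u ^ 2 / 2 := by fun_prop
  refine ((hcont.intervalIntegrable 0 1).sub hQ.intervalIntegrable_integral).congr fun u hu => ?_
  rw [uIoc_of_le zero_le_one] at hu
  exact (hQ.integral_frechetGap (Ioc_subset_Icc_self hu)).symm

theorem integral_integral_frechetGap (hQ : IsQuasiCopula Q) :
    ∫ u in (0 : ℝ)..1, ∫ v in (0 : ℝ)..1, frechetGap Q u v = (1 - spearmanRho Q) / 12 := by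
  have hsq : IntervalIntegrable (fun u : ℝ => u ^ 2 / 2) volume 0 1 :=
    (by fun_prop : Continuous fun u : ℝ => u ^ 2 / 2).intervalIntegrable _ _
  rw [integral_congr fun u hu =>
      hQ.integral_frechetGap (by rwa [uIcc_of_le zero_le_one] at hu),
    intervalIntegral.integral_sub (intervalIntegrable_id.sub hsq) hQ.intervalIntegrable_integral,
    intervalIntegral.integral_sub intervalIntegrable_id hsq, intervalIntegral.integral_div,
    integral_pow, integral_id, spearmanRho]
  norm_num
  ring

theorem mul_le_integral_frechetGap_of_le (hQ : IsQuasiCopula Q) (hp : p ∈ Icc (0 : ℝ) 1)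
    (hq : q ∈ Icc (0 : ℝ) 1) (hpq : p ≤ q) (hu : Q p q ≤ u) (hup : u ≤ p) :
    (q - Q p q) * (u - Q p q) ≤ ∫ v in (0 : ℝ)..1, frechetGap Q u v := by
  have hQ0 := hQ.nonneg hp hq
  have hQ1 := hQ.add_sub_one_le hp hq
  have hu' : u ∈ Icc (0 : ℝ) 1 := ⟨hQ0.trans hu, hup.trans hp.2⟩
  have := trapezoid_area_le_integral (α := Q p q) (β := q + u - Q p q) (h := u - Q p q)
    (hQ.intervalIntegrable_frechetGap hu') (fun v hv => hQ.frechetGap_nonneg hu' hv)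
    hQ0 (by linarith) (by linarith) (by linarith) fun v hv =>
      le_trans (by grind) (hQ.le_frechetGap hp hq hu' ⟨hQ0.trans hv.1, by linarith [hv.2]⟩)
  linarith

theorem mul_le_integral_frechetGap_of_ge (hQ : IsQuasiCopula Q) (hp : p ∈ Icc (0 : ℝ) 1)
    (hq : q ∈ Icc (0 : ℝ) 1) (hpq : p ≤ q) (hpu : p ≤ u) (hu : u ≤ p + q - Q p q) :
    (p - Q p q) * (p + q - Q p q - u) ≤ ∫ v in (0 : ℝ)..1, frechetGap Q u v := by
  have hQ0 := hQ.nonneg hp hq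
  have hQp := hQ.le_left hp hq
  have hQ1 := hQ.add_sub_one_le hp hq
  have hu' : u ∈ Icc (0 : ℝ) 1 := ⟨hp.1.trans hpu, by linarith⟩
  have area : ∀ h, 0 ≤ h → h ≤ p - Q p q → h ≤ p + q - Q p q - u →
      h * (p + q - Q p q - (u - (p - Q p q)) - h) ≤ ∫ v in (0 : ℝ)..1, frechetGap Q u v :=
    fun h h0 hh hh' => trapezoid_area_le_integral (hQ.intervalIntegrable_frechetGap hu')
      (fun v hv => hQ.frechetGap_nonneg hu' hv) (by linarith) (by linarith) h0 (by linarith)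
      fun v hv => le_trans (by grind)
        (hQ.le_frechetGap hp hq hu' ⟨by linarith [hv.1], by linarith [hv.2]⟩)
  rcases le_total u q with huq | hqu
  · linarith [area (p - Q p q) (by linarith) le_rfl (by linarith)]
  · linarith [area (p + q - Q p q - u) (by linarith) (by linarith) le_rfl]

theorem mul_mul_le_one_sub_spearmanRho_of_le (hQ : IsQuasiCopula Q) (hp : p ∈ Icc (0 : ℝ) 1)
    (hq : q ∈ Icc (0 : ℝ) 1) (hpq : p ≤ q) :
    6 * ((p - Q p q) * (q - Q p q) * (p + q - 2 * Q p q)) ≤ 1 - spearmanRho Q := by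
  have hQ0 := hQ.nonneg hp hq
  have hQp := hQ.le_left hp hq
  have hQ1 := hQ.add_sub_one_le hp hq
  have hint := hQ.intervalIntegrable_integral_frechetGap
  have hleft : IntervalIntegrable (fun u => ∫ v in (0 : ℝ)..1, frechetGap Q u v) volume
      (Q p q) p := hint.mono_set (by grind [uIcc_of_le])
  have hright : IntervalIntegrable (fun u => ∫ v in (0 : ℝ)..1, frechetGap Q u v) volume
      p (p + q - Q p q) := hint.mono_set (by grind [uIcc_of_le])
  have rising := mul_midpoint_le_integral_of_affine_le (m := q - Q p q)
    (k := -(q - Q p q) * Q p q) hQp hleft fun u hu => by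
      linarith [hQ.mul_le_integral_frechetGap_of_le hp hq hpq hu.1 hu.2]
  have falling := mul_midpoint_le_integral_of_affine_le (m := -(p - Q p q))
    (k := (p - Q p q) * (p + q - Q p q)) (by linarith) hright fun u hu => by
      linarith [hQ.mul_le_integral_frechetGap_of_ge hp hq hpq hu.1 hu.2]
  have total := integral_subinterval_le_integral hint
    (fun u hu => intervalIntegral.integral_nonneg zero_le_one fun v hv =>
      hQ.frechetGap_nonneg hu hv) hQ0 (by linarith) (by linarith : p + q - Q p q ≤ 1)
  rw [← integral_add_adjacent_intervals hleft hright, hQ.integral_integral_frechetGap] at total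
  linarith

theorem mul_mul_le_one_sub_spearmanRho (hQ : IsQuasiCopula Q) (hp : p ∈ Icc (0 : ℝ) 1)
    (hq : q ∈ Icc (0 : ℝ) 1) :
    6 * ((p - Q p q) * (q - Q p q) * (p + q - 2 * Q p q)) ≤ 1 - spearmanRho Q := by
  rcases le_total p q with hpq | hqp
  · exact hQ.mul_mul_le_one_sub_spearmanRho_of_le hp hq hpq
  · have := hQ.swap.mul_mul_le_one_sub_spearmanRho_of_le hq hp hqp
    rw [hQ.spearmanRho_swap, Function.swap] at this
    linarith

theorem mul_mul_le_one_add_spearmanRho (hQ : IsQuasiCopula Q) (hp : p ∈ Icc (0 : ℝ) 1)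
    (hq : q ∈ Icc (0 : ℝ) 1) :
    6 * ((1 - p - q + Q p q) * Q p q * (1 - p - q + 2 * Q p q)) ≤ 1 + spearmanRho Q := by
  have := hQ.reflectFst.mul_mul_le_one_sub_spearmanRho (Icc.one_sub_mem hp) hq
  simp only [hQ.spearmanRho_reflectFst, reflectFst, sub_sub_cancel] at this
  linarith

theorem sub_swap_le_abs_sub (hQ : IsQuasiCopula Q) (hp : p ∈ Icc (0 : ℝ) 1)
    (hq : q ∈ Icc (0 : ℝ) 1) : Q q p - Q p q ≤ |q - p| := by
  rcases le_total p q with hpq | hqp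
  · rw [abs_of_nonneg (sub_nonneg.2 hpq)]
    linarith [hQ.apply_sub_apply_le hp hq hp hpq, hQ.monotoneOn_right p hp hp hq hpq]
  · rw [abs_of_nonpos (sub_nonpos.2 hqp)]
    have : Q q p - Q q q ≤ p - q := hQ.swap.apply_sub_apply_le hq hp hq hqp
    linarith [hQ.monotoneOn_left q hq hq hp hqp]

theorem sub_swap_le_one_third (hQ : IsQuasiCopula Q) (hp : p ∈ Icc (0 : ℝ) 1)
    (hq : q ∈ Icc (0 : ℝ) 1) : Q q p - Q p q ≤ 1 / 3 := by
  have hdist := hQ.sub_swap_le_abs_sub hp hq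
  have hlow := hQ.nonneg hp hq
  have hlow' := hQ.add_sub_one_le hp hq
  have hup := hQ.le_left hq hp
  have hup' := hQ.le_right hq hp
  rcases abs_cases (q - p) with ⟨habs, -⟩ | ⟨habs, -⟩ <;> linarith

theorem sub_swap_pow_three_le_one_add_spearmanRho (hQ : IsQuasiCopula Q)
    (hp : p ∈ Icc (0 : ℝ) 1) (hq : q ∈ Icc (0 : ℝ) 1) (h : Q p q ≤ Q q p) :
    12 * (Q q p - Q p q) ^ 3 ≤ 1 + spearmanRho Q := by
  have hd : 0 ≤ Q q p - Q p q := sub_nonneg.2 h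
  have h₁ : Q q p - Q p q ≤ 1 - q - p + Q q p := by linarith [hQ.add_sub_one_le hp hq]
  have h₂ : Q q p - Q p q ≤ Q q p := by linarith [hQ.nonneg hp hq]
  have h₃ : 2 * (Q q p - Q p q) ≤ 1 - q - p + 2 * Q q p := by linarith
  calc 12 * (Q q p - Q p q) ^ 3
      = 6 * ((Q q p - Q p q) * (Q q p - Q p q) * (2 * (Q q p - Q p q))) := by ring
    _ ≤ 6 * ((1 - q - p + Q q p) * Q q p * (1 - q - p + 2 * Q q p)) := by
        gcongr
        · exact mul_nonneg (hd.trans h₁) (hd.trans h₂)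
        · exact hd.trans h₁
    _ ≤ 1 + spearmanRho Q := hQ.mul_mul_le_one_add_spearmanRho hq hp

theorem sub_swap_pow_three_le_one_sub_spearmanRho (hQ : IsQuasiCopula Q)
    (hp : p ∈ Icc (0 : ℝ) 1) (hq : q ∈ Icc (0 : ℝ) 1) (h : Q p q ≤ Q q p) :
    36 * (Q q p - Q p q) ^ 3 ≤ 1 - spearmanRho Q := by
  have hd : 0 ≤ Q q p - Q p q := sub_nonneg.2 h
  have hdist := hQ.sub_swap_le_abs_sub hp hq
  have h₁ : Q q p - Q p q ≤ p - Q p q := by linarith [hQ.le_right hq hp]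
  have h₂ : Q q p - Q p q ≤ q - Q p q := by linarith [hQ.le_left hq hp]
  have h₁₂ : (Q q p - Q p q) * (2 * (Q q p - Q p q)) ≤ (p - Q p q) * (q - Q p q) := by
    rcases abs_cases (q - p) with ⟨habs, -⟩ | ⟨habs, -⟩
    · exact mul_le_mul h₁ (by linarith) (by linarith) (by linarith)
    · rw [mul_comm]
      exact mul_le_mul (by linarith) h₂ hd (by linarith)
  have h₃ : 3 * (Q q p - Q p q) ≤ p + q - 2 * Q p q := by
    rcases abs_cases (q - p) with ⟨habs, -⟩ | ⟨habs, -⟩ <;> linarith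
  calc 36 * (Q q p - Q p q) ^ 3
      = 6 * ((Q q p - Q p q) * (2 * (Q q p - Q p q)) * (3 * (Q q p - Q p q))) := by ring
    _ ≤ 6 * ((p - Q p q) * (q - Q p q) * (p + q - 2 * Q p q)) := by
        gcongr
        exact (by positivity : (0 : ℝ) ≤ _).trans h₁₂
    _ ≤ 1 - spearmanRho Q := hQ.mul_mul_le_one_sub_spearmanRho hp hq

end IsQuasiCopula

theorem asymmetry_vs_rho_general {Q : ℝ → ℝ → ℝ} (hQ : IsQuasiCopula Q) {u v : ℝ}
    (hu : u ∈ Icc (0 : ℝ) 1) (hv : v ∈ Icc (0 : ℝ) 1) :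
    |Q u v - Q v u| ≤ ((1 + spearmanRho Q) / 12) ^ ((1 : ℝ) / 3) ∧
      |Q u v - Q v u| ≤ 1 / 3 ∧
      |Q u v - Q v u| ≤ ((1 - spearmanRho Q) / 36) ^ ((1 : ℝ) / 3) := by
  wlog h : Q v u ≤ Q u v generalizing u v
  · rw [abs_sub_comm]
    exact this hv hu (le_of_not_ge h)
  have hd : 0 ≤ Q u v - Q v u := sub_nonneg.2 h
  have hadd := hQ.sub_swap_pow_three_le_one_add_spearmanRho hv hu h
  have hsub := hQ.sub_swap_pow_three_le_one_sub_spearmanRho hv hu h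
  rw [abs_of_nonneg hd]
  exact ⟨mod_cast le_rpow_one_div_of_pow_le three_ne_zero hd (by linarith),
    hQ.sub_swap_le_one_third hv hu,
    mod_cast le_rpow_one_div_of_pow_le three_ne_zero hd (by linarith)⟩

theorem asymmetry_vs_rho (C : ℝ → ℝ → ℝ) (r : ℝ) (hC : IsCopula C)
    (hr : r = spearmanRho C) :
    ∀ u ∈ Set.Icc (0:ℝ) 1, ∀ v ∈ Set.Icc (0:ℝ) 1,
      (-1 ≤ r → r ≤ -5/9 → |C u v - C v u| ≤ ((1 + r)/12) ^ ((1:ℝ)/3)) ∧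
      (-5/9 ≤ r → r ≤ -1/3 → |C u v - C v u| ≤ 1/3) ∧
      (-1/3 ≤ r → r ≤ 1 → |C u v - C v u| ≤ ((1 - r)/36) ^ ((1:ℝ)/3)) := by
  obtain rfl := hr
  intro u hu v hv
  obtain ⟨hadd, hthird, hsub⟩ := asymmetry_vs_rho_general hC.isQuasiCopula hu hv
  exact ⟨fun _ _ => hadd, fun _ _ => hthird, fun _ _ => hsub⟩
end

section
/- Let m ∈ [0,1/3]. For every (a,b) ∈ Δ_m, Spearman's footrule satisfies φ(C̲^{(a,b)}_m) ≥ −1/2 if 0 ≤ m ≤ 1/4 and φ(C̲^{(a,b)}_m) ≥ 24m² − 12m + 1 if 1/4 ≤ m ≤ 1/3, with equality at (a,b) = (m, 1−m); and φ(C̄^{(a,b)}_m) ≤ 1 − 12m², with equality at (a,b) = (m, 2m). -/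
open Set MeasureTheory intervalIntegral

/-! On the diagonal all the functions involved are piecewise affine, hence linear combinations of
the hinges `max (u - c) 0`, whose integrals are elementary.

Lower bound. `lowerC a b m` dominates the Fréchet–Hoeffding bound `W`, whose footrule is `-1/2`.
Among all `a, b ∈ [m, 1 - m]` its diagonal is smallest at `(a, b) = (m, 1 - m)`, where it is the
larger of `W(u, u)` and `u - (1 - 2m)`. The latter exceeds `W(u, u)` exactly for
`1 - 2m < u < 2m`, so it matters only once `m > 1/4`.

Upper bound. For `a, b ∈ [m, 1 - m]` the function `u - upperC a b m u u` is a trapezoid that rises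
with slope one from `min a b - m`, stays at height `m` between `min a b` and `max a b`, and falls
with slope one to `0` at `max a b + m`. Its area `m² + m |b - a|` is the sixth part of the deficit
of the footrule from `1`, and `|b - a| ≥ m` makes it at least `2m²`. -/

theorem integral_max_sub_zero {x y c : ℝ} (hx : x ≤ c) (hy : c ≤ y) :
    ∫ u in x..y, max (u - c) 0 = (y - c) ^ 2 / 2 := by
  have integrable (p q : ℝ) : IntervalIntegrable (fun u : ℝ => max (u - c) 0) volume p q :=
    Continuous.intervalIntegrable (by fun_prop) _ _
  have left : ∫ u in x..c, max (u - c) 0 = 0 := by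
    refine (intervalIntegral.integral_congr fun u hu => max_eq_right ?_).trans
      intervalIntegral.integral_zero
    rw [uIcc_of_le hx] at hu
    linarith [hu.2]
  have right : ∫ u in c..y, max (u - c) 0 = ∫ u in c..y, (u - c) := by
    refine intervalIntegral.integral_congr fun u hu => max_eq_left ?_
    rw [uIcc_of_le hy] at hu
    linarith [hu.1]
  rw [← integral_add_adjacent_intervals (integrable x c) (integrable c y), left, right,
    intervalIntegral.integral_comp_sub_right (fun u => u), integral_id]
  ring

theorem spearmanFootrule_mono {C D : ℝ → ℝ → ℝ}
    (hC : IntervalIntegrable (fun u => C u u) volume 0 1)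
    (hD : IntervalIntegrable (fun u => D u u) volume 0 1)
    (h : ∀ u ∈ Icc (0 : ℝ) 1, C u u ≤ D u u) :
    spearmanFootrule C ≤ spearmanFootrule D := by
  unfold spearmanFootrule
  gcongr
  exact intervalIntegral.integral_mono_on zero_le_one hC hD h

/-- The Fréchet–Hoeffding lower bound `W`, the pointwise smallest copula. -/
noncomputable def frechetLower : ℝ → ℝ → ℝ := fun u v => max (u + v - 1) 0

theorem frechetLower_diag (u : ℝ) : frechetLower u u = 2 * max (u - 1 / 2) 0 := by
  unfold frechetLower
  rw [mul_max_of_nonneg _ _ zero_le_two]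
  ring_nf

theorem intervalIntegrable_frechetLower_diag (x y : ℝ) :
    IntervalIntegrable (fun u => frechetLower u u) volume x y := by
  unfold frechetLower
  exact Continuous.intervalIntegrable (by fun_prop) _ _

theorem spearmanFootrule_frechetLower : spearmanFootrule frechetLower = -(1 / 2) := by
  simp only [spearmanFootrule, frechetLower_diag, intervalIntegral.integral_const_mul]
  rw [integral_max_sub_zero (by norm_num) (by norm_num)]
  norm_num

theorem frechetLower_le_lowerC (a b c u v : ℝ) : frechetLower u v ≤ lowerC a b c u v :=
  le_max_left _ _

theorem intervalIntegrable_lowerC_diag (a b c x y : ℝ) :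
    IntervalIntegrable (fun u => lowerC a b c u u) volume x y := by
  unfold lowerC
  exact Continuous.intervalIntegrable (by fun_prop) _ _

theorem neg_half_le_spearmanFootrule_lowerC (a b c : ℝ) :
    -(1 / 2) ≤ spearmanFootrule (lowerC a b c) := by
  rw [← spearmanFootrule_frechetLower]
  exact spearmanFootrule_mono (intervalIntegrable_frechetLower_diag 0 1)
    (intervalIntegrable_lowerC_diag a b c 0 1) fun u _ => frechetLower_le_lowerC a b c u u

theorem lowerC_corner (c u v : ℝ) :
    lowerC c (1 - c) c u v =
      max (frechetLower u v) (min (min c u) (min (v - (1 - 2 * c)) (u + v - (1 - c)))) := by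
  simp only [lowerC, frechetLower, add_sub_cancel, sub_self, max_self, zero_add]
  ring_nf

theorem lowerC_corner_diag_le {a b c : ℝ} (ha : a ≤ 1 - c) (hb : b ≤ 1 - c) (u : ℝ) :
    lowerC c (1 - c) c u u ≤ lowerC a b c u u := by
  have hW₀ : 0 ≤ max (a + b - 1) 0 := le_max_right _ _
  have hW₁ : a + b - 1 ≤ max (a + b - 1) 0 := le_max_left _ _
  rw [lowerC_corner]
  -- When `u = v`, the term `u - (1 - 2c)` lies below both slope-one terms of `lowerC a b c`.
  refine max_le_max le_rfl (le_min (le_min ?_ ?_) (le_min ?_ ?_))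
  · exact (min_le_left _ _).trans ((min_le_left _ _).trans (by linarith))
  · exact (min_le_right _ _).trans ((min_le_left _ _).trans (by linarith))
  · exact (min_le_right _ _).trans ((min_le_left _ _).trans (by linarith))
  · exact (min_le_right _ _).trans ((min_le_right _ _).trans (by linarith))

theorem spearmanFootrule_lowerC_corner_le {a b c : ℝ} (ha : a ≤ 1 - c) (hb : b ≤ 1 - c) :
    spearmanFootrule (lowerC c (1 - c) c) ≤ spearmanFootrule (lowerC a b c) :=
  spearmanFootrule_mono (intervalIntegrable_lowerC_diag c (1 - c) c 0 1)
    (intervalIntegrable_lowerC_diag a b c 0 1) fun u _ => lowerC_corner_diag_le ha hb u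

theorem lowerC_corner_diag {c : ℝ} (hc : c ≤ 1 / 3) (u : ℝ) :
    lowerC c (1 - c) c u u = max (frechetLower u u) (u - (1 - 2 * c)) := by
  rw [lowerC_corner]
  refine le_antisymm (max_le_max le_rfl ((min_le_right _ _).trans (min_le_left _ _)))
    (max_le (le_max_left _ _) ?_)
  rcases le_or_gt u c with hu | hu
  · exact le_max_of_le_left (le_max_of_le_right (by linarith))
  rcases le_or_gt u (2 * c) with hu' | hu'
  · exact le_max_of_le_right
      (le_min (le_min (by linarith) (by linarith)) (le_min le_rfl (by linarith)))
  · exact le_max_of_le_left (le_max_of_le_left (by linarith))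

theorem lowerC_corner_diag_of_le {c : ℝ} (hc : c ≤ 1 / 4) (u : ℝ) :
    lowerC c (1 - c) c u u = frechetLower u u := by
  rw [lowerC_corner_diag (by linarith)]
  refine max_eq_left ?_
  rcases le_total u (1 / 2) with hu | hu
  · exact le_max_of_le_right (by linarith)
  · exact le_max_of_le_left (by linarith)

theorem lowerC_corner_diag_of_ge {c : ℝ} (hc : 1 / 4 ≤ c) (hc' : c ≤ 1 / 3) (u : ℝ) :
    lowerC c (1 - c) c u u = max (u - (1 - 2 * c)) 0 + max (u - 2 * c) 0 := by
  rw [lowerC_corner_diag hc', frechetLower]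
  grind

theorem spearmanFootrule_lowerC_corner_of_le {c : ℝ} (hc : c ≤ 1 / 4) :
    spearmanFootrule (lowerC c (1 - c) c) = -(1 / 2) := by
  rw [← spearmanFootrule_frechetLower]
  simp only [spearmanFootrule, lowerC_corner_diag_of_le hc]

theorem spearmanFootrule_lowerC_corner_of_ge {c : ℝ} (hc : 1 / 4 ≤ c) (hc' : c ≤ 1 / 3) :
    spearmanFootrule (lowerC c (1 - c) c) = 24 * c ^ 2 - 12 * c + 1 := by
  simp only [spearmanFootrule, lowerC_corner_diag_of_ge hc hc']
  rw [intervalIntegral.integral_add (Continuous.intervalIntegrable (by fun_prop) _ _)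
      (Continuous.intervalIntegrable (by fun_prop) _ _),
    integral_max_sub_zero (by linarith) (by linarith),
    integral_max_sub_zero (by linarith) (by linarith)]
  ring

/-- The trapezoidal bump of height `h` with plateau `[p, q]` and flanks of slope `1` and `-1`
(for `0 ≤ h` and `p ≤ q`). -/
noncomputable def trapezoid (p q h u : ℝ) : ℝ :=
  max 0 (min h (min (u - (p - h)) (q + h - u)))

theorem trapezoid_eq_hinges {p q h : ℝ} (hh : 0 ≤ h) (hpq : p ≤ q) (u : ℝ) :
    trapezoid p q h u =
      max (u - (p - h)) 0 - max (u - p) 0 - (max (u - q) 0 - max (u - (q + h)) 0) := by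
  unfold trapezoid
  grind

theorem intervalIntegrable_trapezoid (p q h x y : ℝ) :
    IntervalIntegrable (trapezoid p q h) volume x y := by
  unfold trapezoid
  exact Continuous.intervalIntegrable (by fun_prop) _ _

theorem integral_trapezoid {p q h x y : ℝ} (hh : 0 ≤ h) (hpq : p ≤ q) (hx : x ≤ p - h)
    (hy : q + h ≤ y) : ∫ u in x..y, trapezoid p q h u = h ^ 2 + h * (q - p) := by
  have integrable (c : ℝ) : IntervalIntegrable (fun u : ℝ => max (u - c) 0) volume x y :=
    Continuous.intervalIntegrable (by fun_prop) _ _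
  simp only [trapezoid_eq_hinges hh hpq]
  rw [intervalIntegral.integral_sub ((integrable _).sub (integrable _))
      ((integrable _).sub (integrable _)),
    intervalIntegral.integral_sub (integrable _) (integrable _),
    intervalIntegral.integral_sub (integrable _) (integrable _),
    integral_max_sub_zero (by linarith) (by linarith),
    integral_max_sub_zero (by linarith) (by linarith),
    integral_max_sub_zero (by linarith) (by linarith),
    integral_max_sub_zero (by linarith) (by linarith)]
  ring

theorem upperC_diag (a b c u : ℝ) :
    upperC a b c u u = u - trapezoid (min a b) (max a b) c u := by
  simp only [upperC, trapezoid, min_self]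
  grind

theorem spearmanFootrule_upperC {a b c : ℝ} (hc : 0 ≤ c) (ha : a ∈ Icc c (1 - c))
    (hb : b ∈ Icc c (1 - c)) :
    spearmanFootrule (upperC a b c) = 1 - 6 * c ^ 2 - 6 * c * |b - a| := by
  have left : c ≤ min a b := le_min ha.1 hb.1
  have right : max a b ≤ 1 - c := max_le ha.2 hb.2
  simp only [spearmanFootrule, upperC_diag]
  rw [intervalIntegral.integral_sub intervalIntegrable_id
      (intervalIntegrable_trapezoid _ _ _ 0 1), integral_id,
    integral_trapezoid hc min_le_max (by linarith) (by linarith), max_sub_min_eq_abs a b]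
  ring

theorem footrule_bounds_on_triangle_general (m : ℝ) (hm : m ∈ Icc (0 : ℝ) (1 / 3)) :
    (∀ a ∈ Icc m (1 - m), ∀ b ∈ Icc m (1 - m),
      -(1 / 2) ≤ spearmanFootrule (lowerC a b m) ∧
      (1 / 4 ≤ m → 24 * m ^ 2 - 12 * m + 1 ≤ spearmanFootrule (lowerC a b m)) ∧
      (m ≤ |b - a| → spearmanFootrule (upperC a b m) ≤ 1 - 12 * m ^ 2)) ∧
    (m ≤ 1 / 4 → spearmanFootrule (lowerC m (1 - m) m) = -(1 / 2)) ∧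
    (1 / 4 ≤ m → spearmanFootrule (lowerC m (1 - m) m) = 24 * m ^ 2 - 12 * m + 1) ∧
    spearmanFootrule (upperC m (2 * m) m) = 1 - 12 * m ^ 2 := by
  obtain ⟨hm₀, hm₁⟩ := hm
  refine ⟨fun a ha b hb => ⟨neg_half_le_spearmanFootrule_lowerC a b m, fun h => ?_, fun h => ?_⟩,
    spearmanFootrule_lowerC_corner_of_le,
    fun h => spearmanFootrule_lowerC_corner_of_ge h hm₁, ?_⟩
  · rw [← spearmanFootrule_lowerC_corner_of_ge h hm₁]
    exact spearmanFootrule_lowerC_corner_le ha.2 hb.2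
  · rw [spearmanFootrule_upperC hm₀ ha hb]
    linarith [mul_le_mul_of_nonneg_left h hm₀]
  · rw [spearmanFootrule_upperC hm₀ ⟨le_rfl, by linarith⟩ ⟨by linarith, by linarith⟩,
      two_mul, add_sub_cancel_right, abs_of_nonneg hm₀]
    ring

theorem footrule_bounds_on_triangle (m : ℝ) (hm : m ∈ Set.Icc (0:ℝ) (1/3)) :
    (∀ a b : ℝ, a ∈ Set.Icc (0:ℝ) 1 → b ∈ Set.Icc (0:ℝ) 1 →
      m ≤ a → m ≤ b - a → a + b ≤ 1 →
      ((m ≤ 1/4 → -(1/2) ≤ spearmanFootrule (lowerC a b m)) ∧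
       (1/4 ≤ m → 24 * m^2 - 12 * m + 1 ≤ spearmanFootrule (lowerC a b m)) ∧
       spearmanFootrule (upperC a b m) ≤ 1 - 12 * m^2)) ∧
    (m ≤ 1/4 → spearmanFootrule (lowerC m (1 - m) m) = -(1/2)) ∧
    (1/4 ≤ m → spearmanFootrule (lowerC m (1 - m) m) = 24 * m^2 - 12 * m + 1) ∧
    spearmanFootrule (upperC m (2 * m) m) = 1 - 12 * m^2 := by
  obtain ⟨bounds, equalities⟩ := footrule_bounds_on_triangle_general m hm
  refine ⟨fun a b _ _ ha hab hs => ?_, equalities⟩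
  obtain ⟨lower, lower', upper⟩ :=
    bounds a ⟨ha, by linarith [hm.1]⟩ b ⟨by linarith [hm.1], by linarith⟩
  exact ⟨fun _ => lower, lower', upper (hab.trans (le_abs_self _))⟩
end

section
/- Let C be a copula and let f = φ(C) be its Spearman's footrule. Then for all (u,v) ∈ [0,1]²: if −1/2 ≤ f ≤ −1/3 then |C(u,v) − C(v,u)| ≤ (3 + √(3 + 6f))/12, and if −1/3 ≤ f ≤ 1 then |C(u,v) − C(v,u)| ≤ √((1 − f)/12). -/
open Set MeasureTheory intervalIntegral

/-!
Fix `a ≤ b` and let `d = C a b - C b a`. As `C` is nondecreasing and 1-Lipschitz in each variable,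
`d` constrains the diagonal `u ↦ C u u` from both sides. It lies below the identity by at least
the trapezoid of height `d` and unit slopes over `[a - d, b + d]`, whose area is at least `2 d ^ 2`
because `d ≤ b - a`; this bounds the footrule from above. It lies above `u ↦ u - (1 - 2 d)`, as well
as above `0` and `u ↦ 2 u - 1`; for `d ≥ 1 / 4` this bounds the footrule from below. Solving the two
quadratic inequalities for `d` gives the two estimates.
-/

theorem mul_affine_midpoint_le_integral {g : ℝ → ℝ} {p q : ℝ} (α β : ℝ) (hpq : p ≤ q)
    (hg : IntervalIntegrable g volume p q) (h : ∀ u ∈ Icc p q, α * u + β ≤ g u) :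
    (q - p) * (α * ((p + q) / 2) + β) ≤ ∫ u in p..q, g u := by
  have h_affine : ∫ u in p..q, (α * u + β) = (q - p) * (α * ((p + q) / 2) + β) := by
    rw [integral_add (Continuous.intervalIntegrable (by fun_prop) _ _) intervalIntegrable_const,
      intervalIntegral.integral_const_mul, integral_id, intervalIntegral.integral_const,
      smul_eq_mul]
    ring
  rw [← h_affine]
  exact integral_mono_on hpq (Continuous.intervalIntegrable (by fun_prop) _ _) hg h

theorem trapezoid_area_le_integral_s16 {g : ℝ → ℝ} {p q d : ℝ} (hpq : p ≤ q) (hd : 0 ≤ d)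
    (hg : IntervalIntegrable g volume (p - d) (q + d))
    (h : ∀ u ∈ Icc (p - d) (q + d), d - max (p - u) 0 - max (u - q) 0 ≤ g u) :
    d * (q - p + d) ≤ ∫ u in (p - d)..(q + d), g u := by
  have hg_rise : IntervalIntegrable g volume (p - d) p :=
    hg.mono_set (uIcc_subset_uIcc left_mem_uIcc (mem_uIcc_of_le (by linarith) (by linarith)))
  have hg_plateau : IntervalIntegrable g volume p q :=
    hg.mono_set (uIcc_subset_uIcc (mem_uIcc_of_le (by linarith) (by linarith))
      (mem_uIcc_of_le (by linarith) (by linarith)))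
  have hg_fall : IntervalIntegrable g volume q (q + d) :=
    hg.mono_set (uIcc_subset_uIcc (mem_uIcc_of_le (by linarith) (by linarith)) right_mem_uIcc)
  have h_rise := mul_affine_midpoint_le_integral 1 (d - p) (by linarith) hg_rise fun u hu => by
    have hu' := h u ⟨hu.1, by linarith [hu.2]⟩
    rw [max_eq_left (sub_nonneg.2 hu.2), max_eq_right (sub_nonpos.2 (hu.2.trans hpq))] at hu'
    linarith
  have h_plateau := mul_affine_midpoint_le_integral 0 d hpq hg_plateau fun u hu => by
    have hu' := h u ⟨by linarith [hu.1], by linarith [hu.2]⟩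
    rw [max_eq_right (sub_nonpos.2 hu.1), max_eq_right (sub_nonpos.2 hu.2)] at hu'
    linarith
  have h_fall := mul_affine_midpoint_le_integral (-1) (q + d) (by linarith) hg_fall fun u hu => by
    have hu' := h u ⟨by linarith [hu.1], hu.2⟩
    rw [max_eq_right (sub_nonpos.2 (hpq.trans hu.1)), max_eq_left (sub_nonneg.2 hu.1)] at hu'
    linarith
  rw [← integral_add_adjacent_intervals (hg_rise.trans hg_plateau) hg_fall,
    ← integral_add_adjacent_intervals hg_rise hg_plateau]
  linarith

namespace IsCopula

variable {C : ℝ → ℝ → ℝ} {u u' v v' a b : ℝ}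

theorem apply_zero_right (hC : IsCopula C) (hu : u ∈ Icc (0 : ℝ) 1) : C u 0 = 0 :=
  (hC.1 u hu).1

theorem apply_one_right (hC : IsCopula C) (hu : u ∈ Icc (0 : ℝ) 1) : C u 1 = u :=
  (hC.1 u hu).2.2.1

theorem transpose (hC : IsCopula C) : IsCopula fun u v => C v u := by
  refine ⟨fun u hu => ?_, fun u₁ u₂ v₁ v₂ hu₁ hu hu₂ hv₁ hv hv₂ => ?_⟩
  · obtain ⟨zero_right, zero_left, one_right, one_left⟩ := hC.1 u hu
    exact ⟨zero_left, zero_right, one_left, one_right⟩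
  · linarith [hC.2 v₁ v₂ u₁ u₂ hv₁ hv hv₂ hu₁ hu hu₂]

theorem mono_left (hC : IsCopula C) (hu : u ∈ Icc (0 : ℝ) 1) (hu' : u' ∈ Icc (0 : ℝ) 1)
    (hv : v ∈ Icc (0 : ℝ) 1) (h : u ≤ u') : C u v ≤ C u' v := by
  have rectangle := hC.2 u u' 0 v hu.1 h hu'.2 le_rfl hv.1 hv.2
  linarith [hC.apply_zero_right hu, hC.apply_zero_right hu']

theorem mono_right (hC : IsCopula C) (hu : u ∈ Icc (0 : ℝ) 1) (hv : v ∈ Icc (0 : ℝ) 1)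
    (hv' : v' ∈ Icc (0 : ℝ) 1) (h : v ≤ v') : C u v ≤ C u v' :=
  hC.transpose.mono_left hv hv' hu h

theorem sub_le_sub_left (hC : IsCopula C) (hu : u ∈ Icc (0 : ℝ) 1) (hu' : u' ∈ Icc (0 : ℝ) 1)
    (hv : v ∈ Icc (0 : ℝ) 1) (h : u ≤ u') : C u' v - C u v ≤ u' - u := by
  have rectangle := hC.2 u u' v 1 hu.1 h hu'.2 hv.1 hv.2 le_rfl
  linarith [hC.apply_one_right hu, hC.apply_one_right hu']

theorem sub_le_max_left (hC : IsCopula C) (hu : u ∈ Icc (0 : ℝ) 1) (hu' : u' ∈ Icc (0 : ℝ) 1)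
    (hv : v ∈ Icc (0 : ℝ) 1) : C u' v - C u v ≤ max (u' - u) 0 := by
  rcases le_total u u' with h | h
  · exact (hC.sub_le_sub_left hu hu' hv h).trans (le_max_left _ _)
  · exact (sub_nonpos.2 (hC.mono_left hu' hu hv h)).trans (le_max_right _ _)

theorem sub_le_max_add_max (hC : IsCopula C) (hu : u ∈ Icc (0 : ℝ) 1) (hv : v ∈ Icc (0 : ℝ) 1)
    (hu' : u' ∈ Icc (0 : ℝ) 1) (hv' : v' ∈ Icc (0 : ℝ) 1) :
    C u' v' - C u v ≤ max (u' - u) 0 + max (v' - v) 0 :=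
  calc
    C u' v' - C u v = (C u' v' - C u v') + (C u v' - C u v) := by ring
    _ ≤ max (u' - u) 0 + max (v' - v) 0 :=
      add_le_add (hC.sub_le_max_left hu hu' hv') (hC.transpose.sub_le_max_left hv hv' hu)

theorem nonneg (hC : IsCopula C) (hu : u ∈ Icc (0 : ℝ) 1) (hv : v ∈ Icc (0 : ℝ) 1) :
    0 ≤ C u v :=
  (hC.apply_zero_right hu).symm.le.trans
    (hC.mono_right hu (left_mem_Icc.2 zero_le_one) hv hv.1)

theorem le_left (hC : IsCopula C) (hu : u ∈ Icc (0 : ℝ) 1) (hv : v ∈ Icc (0 : ℝ) 1) :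
    C u v ≤ u :=
  (hC.mono_right hu hv (right_mem_Icc.2 zero_le_one) hv.2).trans (hC.apply_one_right hu).le

theorem add_sub_one_le (hC : IsCopula C) (hu : u ∈ Icc (0 : ℝ) 1) (hv : v ∈ Icc (0 : ℝ) 1) :
    u + v - 1 ≤ C u v := by
  have h := hC.transpose.sub_le_sub_left hv (right_mem_Icc.2 zero_le_one) hu hv.2
  linarith [hC.apply_one_right hu]

theorem sub_swap_le_left (hC : IsCopula C) (ha : a ∈ Icc (0 : ℝ) 1) (hb : b ∈ Icc (0 : ℝ) 1) :
    C a b - C b a ≤ a := by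
  linarith [hC.le_left ha hb, hC.nonneg hb ha]

theorem sub_swap_le_one_sub (hC : IsCopula C) (ha : a ∈ Icc (0 : ℝ) 1)
    (hb : b ∈ Icc (0 : ℝ) 1) : C a b - C b a ≤ 1 - b := by
  linarith [hC.le_left ha hb, hC.add_sub_one_le hb ha]

theorem sub_swap_le_sub (hC : IsCopula C) (ha : a ∈ Icc (0 : ℝ) 1) (hb : b ∈ Icc (0 : ℝ) 1)
    (hab : a ≤ b) : C a b - C b a ≤ b - a := by
  simpa [hab] using hC.sub_le_max_add_max hb ha ha hb

theorem sub_swap_le_one_third (hC : IsCopula C) (ha : a ∈ Icc (0 : ℝ) 1)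
    (hb : b ∈ Icc (0 : ℝ) 1) (hab : a ≤ b) : C a b - C b a ≤ 1 / 3 := by
  linarith [hC.sub_swap_le_left ha hb, hC.sub_swap_le_sub ha hb hab, hC.sub_swap_le_one_sub ha hb]

theorem monotoneOn_diag (hC : IsCopula C) : MonotoneOn (fun u => C u u) (Icc 0 1) :=
  fun _ hu _ hv huv => (hC.mono_left hu hv hu huv).trans (hC.mono_right hv hu hv huv)

theorem intervalIntegrable_diag (hC : IsCopula C) (hu : u ∈ Icc (0 : ℝ) 1)
    (hv : v ∈ Icc (0 : ℝ) 1) : IntervalIntegrable (fun t => C t t) volume u v :=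
  (hC.monotoneOn_diag.mono (uIcc_subset_Icc hu hv)).intervalIntegrable

theorem intervalIntegrable_sub_diag (hC : IsCopula C) (hu : u ∈ Icc (0 : ℝ) 1)
    (hv : v ∈ Icc (0 : ℝ) 1) : IntervalIntegrable (fun t => t - C t t) volume u v :=
  intervalIntegrable_id.sub (hC.intervalIntegrable_diag hu hv)

theorem one_sub_spearmanFootrule (hC : IsCopula C) :
    1 - spearmanFootrule C = 6 * ∫ u in (0 : ℝ)..1, (u - C u u) := by
  rw [spearmanFootrule, integral_sub intervalIntegrable_id (hC.intervalIntegrable_diag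
    (left_mem_Icc.2 zero_le_one) (right_mem_Icc.2 zero_le_one)), integral_id]
  ring

theorem sub_swap_sub_max_sub_max_le_sub_diag (hC : IsCopula C) (ha : a ∈ Icc (0 : ℝ) 1)
    (hb : b ∈ Icc (0 : ℝ) 1) (hu : u ∈ Icc (0 : ℝ) 1) :
    C a b - C b a - max (a - u) 0 - max (u - b) 0 ≤ u - C u u := by
  have h_diag := hC.sub_le_max_add_max hb ha hu hu
  have h_max : max (u - a) 0 = u - a + max (a - u) 0 := by
    rw [← max_add_add_left, add_zero, sub_add_sub_cancel, sub_self, max_comm]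
  linarith [hC.le_left ha hb]

theorem sub_diag_le_one_sub_two_mul_sub_swap (hC : IsCopula C) (ha : a ∈ Icc (0 : ℝ) 1)
    (hb : b ∈ Icc (0 : ℝ) 1) (hab : a ≤ b) (hu : u ∈ Icc (0 : ℝ) 1) :
    u - C u u ≤ 1 - 2 * (C a b - C b a) := by
  have h_third := hC.sub_swap_le_one_third ha hb hab
  have h_ab := hC.sub_le_max_add_max hu hu ha hb
  rcases le_total u a with hua | hau
  · rw [max_eq_left (sub_nonneg.2 hua), max_eq_left (sub_nonneg.2 (hua.trans hab))] at h_ab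
    rcases le_total u (C a b - C b a) with hud | hdu
    · linarith [hC.nonneg hu hu]
    · linarith [hC.add_sub_one_le hb ha]
  rw [max_eq_right (sub_nonpos.2 hau)] at h_ab
  rcases le_total u b with hub | hbu
  · rw [max_eq_left (sub_nonneg.2 hub)] at h_ab
    linarith [hC.nonneg hb ha, hC.sub_swap_le_one_sub ha hb]
  · rw [max_eq_right (sub_nonpos.2 hbu)] at h_ab
    linarith [hC.nonneg hb ha, hC.add_sub_one_le hu hu]

theorem two_mul_sq_sub_swap_le_integral_sub_diag (hC : IsCopula C) (ha : a ∈ Icc (0 : ℝ) 1)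
    (hb : b ∈ Icc (0 : ℝ) 1) (hab : a ≤ b) (h_nonneg : 0 ≤ C a b - C b a) :
    2 * (C a b - C b a) ^ 2 ≤ ∫ u in (0 : ℝ)..1, (u - C u u) := by
  have h_tent (u) (hu : u ∈ Icc (0 : ℝ) 1) :=
    hC.sub_swap_sub_max_sub_max_le_sub_diag ha hb hu
  have h_gap := hC.sub_swap_le_sub ha hb hab
  have h_left := hC.sub_swap_le_left ha hb
  have h_right := hC.sub_swap_le_one_sub ha hb
  set d := C a b - C b a
  have had : a - d ∈ Icc (0 : ℝ) 1 := ⟨by linarith, by linarith [ha.2]⟩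
  have hbd : b + d ∈ Icc (0 : ℝ) 1 := ⟨by linarith [hb.1], by linarith⟩
  calc
    2 * d ^ 2 ≤ d * (b - a + d) := by linarith [mul_le_mul_of_nonneg_left h_gap h_nonneg]
    _ ≤ ∫ u in (a - d)..(b + d), (u - C u u) :=
      trapezoid_area_le_integral_s16 hab h_nonneg (hC.intervalIntegrable_sub_diag had hbd)
        fun u hu => h_tent u (Icc_subset_Icc had.1 hbd.2 hu)
    _ ≤ ∫ u in (0 : ℝ)..1, (u - C u u) :=
      integral_mono_interval had.1 (by linarith) hbd.2
        (ae_restrict_of_forall_mem measurableSet_Ioc fun u hu =>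
          sub_nonneg.2 (hC.le_left (Ioc_subset_Icc_self hu) (Ioc_subset_Icc_self hu)))
        (hC.intervalIntegrable_sub_diag (left_mem_Icc.2 zero_le_one)
          (right_mem_Icc.2 zero_le_one))

theorem le_integral_diag_of_le_sub_swap (hC : IsCopula C) (ha : a ∈ Icc (0 : ℝ) 1)
    (hb : b ∈ Icc (0 : ℝ) 1) (hab : a ≤ b) (h_quarter : 1 / 4 ≤ C a b - C b a) :
    1 / 4 + (4 * (C a b - C b a) - 1) ^ 2 / 4 ≤ ∫ u in (0 : ℝ)..1, C u u := by
  have h_middle (u) (hu : u ∈ Icc (0 : ℝ) 1) :=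
    hC.sub_diag_le_one_sub_two_mul_sub_swap ha hb hab hu
  have h_third := hC.sub_swap_le_one_third ha hb hab
  set d := C a b - C b a
  have h_zero : (0 : ℝ) ∈ Icc (0 : ℝ) 1 := left_mem_Icc.2 zero_le_one
  have h_one : (1 : ℝ) ∈ Icc (0 : ℝ) 1 := right_mem_Icc.2 zero_le_one
  have hp : 1 - 2 * d ∈ Icc (0 : ℝ) 1 := ⟨by linarith, by linarith⟩
  have hq : 2 * d ∈ Icc (0 : ℝ) 1 := ⟨by linarith, by linarith⟩
  have h_slope_zero := mul_affine_midpoint_le_integral 0 0 hp.1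
    (hC.intervalIntegrable_diag h_zero hp) fun u hu => by
      have hu' : u ∈ Icc (0 : ℝ) 1 := ⟨hu.1, hu.2.trans hp.2⟩
      linarith [hC.nonneg hu' hu']
  have h_slope_one := mul_affine_midpoint_le_integral 1 (2 * d - 1) (by linarith)
    (hC.intervalIntegrable_diag hp hq) fun u hu => by
      linarith [h_middle u ⟨hp.1.trans hu.1, hu.2.trans hq.2⟩]
  have h_slope_two := mul_affine_midpoint_le_integral 2 (-1) hq.2
    (hC.intervalIntegrable_diag hq h_one) fun u hu => by
      have hu' : u ∈ Icc (0 : ℝ) 1 := ⟨hq.1.trans hu.1, hu.2⟩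
      linarith [hC.add_sub_one_le hu' hu']
  rw [← integral_add_adjacent_intervals (hC.intervalIntegrable_diag h_zero hp)
      (hC.intervalIntegrable_diag hp h_one),
    ← integral_add_adjacent_intervals (hC.intervalIntegrable_diag hp hq)
      (hC.intervalIntegrable_diag hq h_one)]
  linarith

theorem sub_swap_le_sqrt_one_sub_spearmanFootrule (hC : IsCopula C) (ha : a ∈ Icc (0 : ℝ) 1)
    (hb : b ∈ Icc (0 : ℝ) 1) (hab : a ≤ b) :
    C a b - C b a ≤ √((1 - spearmanFootrule C) / 12) := by
  rcases le_total 0 (C a b - C b a) with h_nonneg | h_nonpos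
  · apply Real.le_sqrt_of_sq_le
    linarith [hC.two_mul_sq_sub_swap_le_integral_sub_diag ha hb hab h_nonneg,
      hC.one_sub_spearmanFootrule]
  · exact h_nonpos.trans (Real.sqrt_nonneg _)

theorem sub_swap_le_add_sqrt_spearmanFootrule (hC : IsCopula C) (ha : a ∈ Icc (0 : ℝ) 1)
    (hb : b ∈ Icc (0 : ℝ) 1) (hab : a ≤ b) :
    C a b - C b a ≤ (3 + √(3 + 6 * spearmanFootrule C)) / 12 := by
  rcases le_total (C a b - C b a) (1 / 4) with h_le | h_ge
  · linarith [Real.sqrt_nonneg (3 + 6 * spearmanFootrule C)]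
  · have h_root : 12 * (C a b - C b a) - 3 ≤ √(3 + 6 * spearmanFootrule C) := by
      apply Real.le_sqrt_of_sq_le
      rw [spearmanFootrule]
      linarith [hC.le_integral_diag_of_le_sub_swap ha hb hab h_ge]
    linarith

theorem sub_swap_le_min (hC : IsCopula C) (ha : a ∈ Icc (0 : ℝ) 1) (hb : b ∈ Icc (0 : ℝ) 1)
    (hab : a ≤ b) :
    C a b - C b a ≤ min ((3 + √(3 + 6 * spearmanFootrule C)) / 12)
      √((1 - spearmanFootrule C) / 12) :=
  le_min (hC.sub_swap_le_add_sqrt_spearmanFootrule ha hb hab)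
    (hC.sub_swap_le_sqrt_one_sub_spearmanFootrule ha hb hab)

end IsCopula

theorem asymmetry_vs_footrule_general {C : ℝ → ℝ → ℝ} (hC : IsCopula C) {u v : ℝ}
    (hu : u ∈ Icc (0 : ℝ) 1) (hv : v ∈ Icc (0 : ℝ) 1) :
    |C u v - C v u| ≤ min ((3 + √(3 + 6 * spearmanFootrule C)) / 12)
      √((1 - spearmanFootrule C) / 12) := by
  wlog huv : u ≤ v generalizing u v
  · rw [abs_sub_comm]
    exact this hv hu (le_of_not_ge huv)
  exact abs_sub_le_iff.2 ⟨hC.sub_swap_le_min hu hv huv, hC.transpose.sub_swap_le_min hu hv huv⟩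

theorem asymmetry_vs_footrule (C : ℝ → ℝ → ℝ) (f : ℝ) (hC : IsCopula C)
    (hf : f = spearmanFootrule C) :
    ∀ u ∈ Set.Icc (0:ℝ) 1, ∀ v ∈ Set.Icc (0:ℝ) 1,
      (-(1/2) ≤ f → f ≤ -(1/3) → |C u v - C v u| ≤ (3 + Real.sqrt (3 + 6 * f)) / 12) ∧
      (-(1/3) ≤ f → f ≤ 1 → |C u v - C v u| ≤ Real.sqrt ((1 - f) / 12)) := by
  subst hf
  intro u hu v hv
  have key := asymmetry_vs_footrule_general hC hu hv
  exact ⟨fun _ _ => key.trans (min_le_left _ _), fun _ _ => key.trans (min_le_right _ _)⟩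
end

section
/- Let m ∈ [0,1/3]. For every (a,b) ∈ Δ_m, Gini's gamma satisfies: γ(C̲^{(a,b)}_m) ≥ 4m² − 1 if 0 ≤ m ≤ 1/4 and γ(C̲^{(a,b)}_m) ≥ 20m² − 8m if 1/4 ≤ m ≤ 1/3, with equality at (a,b) = (m, 1−m); and γ(C̄^{(a,b)}_m) ≤ h(m), with equality at (a,b) = (m, 2m), where h(m) = 1 − 8m² if 0 ≤ m ≤ 1/6, h(m) = 12m − 44m² if 1/6 ≤ m ≤ 1/5, h(m) = 1 + 2m − 19m² if 1/5 ≤ m ≤ 1/4, and h(m) = 2 − 6m − 3m² if 1/4 ≤ m ≤ 1/3. -/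
open Set MeasureTheory intervalIntegral

/-!
Along the diagonal and the antidiagonal, both bounds are signed sums of triangular bumps of slope
`±1`, and such a bump over `[p, q]` has area `((q - p)⁺)² / 4`. This gives Gini's gamma of the
bounds in closed form on the whole triangle; the branches of the extremal values record which bumps
are nondegenerate.

The lower bound is pointwise antitone in `b` along the diagonal, and a trapezoid of height `c` and
plateau `[a, 1 - b]` along the antidiagonal, so its gamma decreases in `b` and in `a + b`. The upper
bound is pointwise antitone in `b` and `b - a` along the antidiagonal, and along the diagonal it is
`u` minus a trapezoid of height `c` and plateau `[a, b]`, so its gamma decreases in `b` and in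
`b - a`. The extremal vertices are therefore `(m, 1 - m)` and `(m, 2m)`.
-/

/-- The triangular bump over `[p, q]` with slopes `1` and `-1`. It vanishes when `q ≤ p`, so that
signed sums of tents need no case distinction on the order of their endpoints. -/
noncomputable def tent (p q u : ℝ) : ℝ := (min (u - p) (q - u))⁺

section Tent

variable {p q s t : ℝ}

lemma continuous_tent (p q : ℝ) : Continuous (tent p q) := by
  unfold tent posPart; fun_prop

lemma intervalIntegrable_tent (p q s t : ℝ) : IntervalIntegrable (tent p q) volume s t :=
  (continuous_tent p q).intervalIntegrable s t

lemma tent_of_le (h : q ≤ p) (u : ℝ) : tent p q u = 0 :=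
  posPart_of_nonpos (by grind)

lemma tent_eq_posPart_sub (h : p ≤ q) (u : ℝ) :
    tent p q u = (u - p)⁺ - 2 * (u - (p + q) / 2)⁺ + (u - q)⁺ := by
  simp only [tent, posPart_def]
  grind

lemma tent_sub_tent_eq_trapezoid {c : ℝ} (hc : 0 ≤ c) (p q u : ℝ) :
    tent (p - c) (q + c) u - tent p q u = (min c (min (u - p + c) (q + c - u)))⁺ := by
  simp only [tent, posPart_def]
  grind

lemma intervalIntegrable_posPart_sub (p s t : ℝ) :
    IntervalIntegrable (fun u : ℝ => (u - p)⁺) volume s t :=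
  Continuous.intervalIntegrable (by unfold posPart; fun_prop) s t

lemma integral_posPart_sub (hs : s ≤ p) (ht : p ≤ t) :
    ∫ u in s..t, (u - p)⁺ = (t - p) ^ 2 / 2 := by
  have hleft : ∫ u in s..p, (u - p)⁺ = ∫ _ in s..p, (0 : ℝ) :=
    integral_congr fun u hu => posPart_of_nonpos (by grind [uIcc_of_le])
  have hright : ∫ u in p..t, (u - p)⁺ = ∫ u in p..t, (u - p) :=
    integral_congr fun u hu => posPart_of_nonneg (by grind [uIcc_of_le])
  rw [← integral_add_adjacent_intervals (intervalIntegrable_posPart_sub p s p)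
    (intervalIntegrable_posPart_sub p p t), hleft, hright,
    intervalIntegral.integral_comp_sub_right (fun u => u)]
  simp

lemma integral_tent (hs : s ≤ p) (ht : q ≤ t) :
    ∫ u in s..t, tent p q u = (q - p)⁺ ^ 2 / 4 := by
  rcases le_total q p with h | h
  · simp [tent_of_le h, posPart_of_nonpos (sub_nonpos.2 h)]
  · have hint (r : ℝ) := intervalIntegrable_posPart_sub r s t
    simp_rw [tent_eq_posPart_sub h]
    rw [integral_add ((hint p).sub ((hint _).const_mul 2)) (hint q),
      integral_sub (hint p) ((hint _).const_mul 2), intervalIntegral.integral_const_mul,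
      integral_posPart_sub hs (by linarith), integral_posPart_sub (by linarith) (by linarith),
      integral_posPart_sub (by linarith) ht, posPart_of_nonneg (sub_nonneg.2 h)]
    ring

lemma integral_tent_sub_tent {c : ℝ} (hc : 0 ≤ c) (hpq : p ≤ q) (hs : s ≤ p - c)
    (ht : q + c ≤ t) :
    ∫ u in s..t, (tent (p - c) (q + c) u - tent p q u) = c * (q - p + c) := by
  rw [integral_sub (intervalIntegrable_tent _ _ s t) (intervalIntegrable_tent p q s t),
    integral_tent hs ht, integral_tent (by linarith) (by linarith),
    posPart_of_nonneg (by linarith), posPart_of_nonneg (by linarith)]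
  ring

end Tent

section Continuity

lemma continuous_uncurry_lowerC (a b c : ℝ) : Continuous (Function.uncurry (lowerC a b c)) := by
  unfold lowerC Function.uncurry; fun_prop

lemma continuous_uncurry_upperC (a b c : ℝ) : Continuous (Function.uncurry (upperC a b c)) := by
  unfold upperC Function.uncurry; fun_prop

variable {C : ℝ → ℝ → ℝ}

lemma intervalIntegrable_diag (hC : Continuous (Function.uncurry C)) (s t : ℝ) :
    IntervalIntegrable (fun u => C u u) volume s t :=
  (hC.comp (continuous_id.prodMk continuous_id)).intervalIntegrable s t

lemma intervalIntegrable_antidiag (hC : Continuous (Function.uncurry C)) (s t : ℝ) :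
    IntervalIntegrable (fun u => C u (1 - u)) volume s t :=
  (hC.comp (continuous_id.prodMk (continuous_sub_left 1))).intervalIntegrable s t

lemma giniGamma_eq_integral_add_integral (hC : Continuous (Function.uncurry C)) :
    giniGamma C = 4 * ((∫ u in (0 : ℝ)..1, C u u) + ∫ u in (0 : ℝ)..1, C u (1 - u)) - 2 := by
  rw [giniGamma, integral_add (intervalIntegrable_diag hC 0 1) (intervalIntegrable_antidiag hC 0 1)]

end Continuity

section LowerBound

variable {a b c : ℝ}

lemma lowerC_diag (hba : c ≤ b - a) (hsum : a + b ≤ 1) (u : ℝ) :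
    lowerC a b c u u = max (max (2 * u - 1) 0) (min c (u - b + c)) := by
  rw [lowerC, max_eq_right (by linarith : a + b - 1 ≤ 0)]
  grind

/-- The ramp `u - b + c` exceeds `(2 * u - 1)⁺` by the tent over `[b - c, 1 + c - b]`; capping the
ramp at height `c` takes away the tent over `[b, 1 + c - b]`. -/
lemma lowerC_diag_eq_tent (hc : 0 ≤ c) (hba : c ≤ b - a) (hsum : a + b ≤ 1) {u : ℝ}
    (hu : u ∈ Icc 0 1) :
    lowerC a b c u u =
      u - tent 0 1 u + (tent (b - c) (1 + c - b) u - tent b (1 + c - b) u) := by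
  obtain ⟨hu₀, hu₁⟩ := hu
  rw [lowerC_diag hba hsum]
  simp only [tent, posPart_def]
  grind

lemma lowerC_antidiag_eq_tent (hc : 0 ≤ c) (hsum : a + b ≤ 1) (u : ℝ) :
    lowerC a b c u (1 - u) = tent (a - c) (1 - b + c) u - tent a (1 - b) u := by
  rw [tent_sub_tent_eq_trapezoid hc, lowerC, max_eq_right (by linarith : a + b - 1 ≤ 0),
    posPart_def]
  grind

lemma integral_lowerC_diag (hc : 0 ≤ c) (ha : c ≤ a) (hba : c ≤ b - a) (hsum : a + b ≤ 1) :
    ∫ u in (0 : ℝ)..1, lowerC a b c u u =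
      (1 + (1 + 2 * c - 2 * b)⁺ ^ 2 - (1 + c - 2 * b)⁺ ^ 2) / 4 := by
  have hint (p q : ℝ) := intervalIntegrable_tent p q 0 1
  have hid : IntervalIntegrable (fun u : ℝ => u) volume 0 1 := intervalIntegrable_id
  have hcongr : ∫ u in (0 : ℝ)..1, lowerC a b c u u = ∫ u in (0 : ℝ)..1,
      (u - tent 0 1 u + (tent (b - c) (1 + c - b) u - tent b (1 + c - b) u)) :=
    integral_congr fun u hu =>
      lowerC_diag_eq_tent hc hba hsum (by rwa [uIcc_of_le zero_le_one] at hu)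
  rw [hcongr, integral_add (hid.sub (hint _ _)) ((hint _ _).sub (hint _ _)),
    integral_sub hid (hint _ _), integral_sub (hint _ _) (hint _ _), integral_id,
    integral_tent le_rfl le_rfl, integral_tent (by linarith) (by linarith),
    integral_tent (by linarith) (by linarith), posPart_of_nonneg (by norm_num : (0 : ℝ) ≤ 1 - 0)]
  ring_nf

lemma integral_lowerC_antidiag (hc : 0 ≤ c) (ha : c ≤ a) (hb : c ≤ b) (hsum : a + b ≤ 1) :
    ∫ u in (0 : ℝ)..1, lowerC a b c u (1 - u) = c * (1 - a - b + c) := by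
  simp_rw [lowerC_antidiag_eq_tent hc hsum]
  rw [integral_tent_sub_tent hc (by linarith) (by linarith) (by linarith)]
  ring

theorem giniGamma_lowerC (hc : 0 ≤ c) (ha : c ≤ a) (hba : c ≤ b - a) (hsum : a + b ≤ 1) :
    giniGamma (lowerC a b c) =
      4 * c * (1 - a - b + c) - 1 + (1 + 2 * c - 2 * b)⁺ ^ 2 - (1 + c - 2 * b)⁺ ^ 2 := by
  rw [giniGamma_eq_integral_add_integral (continuous_uncurry_lowerC a b c),
    integral_lowerC_diag hc ha hba hsum, integral_lowerC_antidiag hc ha (by linarith) hsum]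
  ring

theorem giniGamma_lowerC_anti {a' b' : ℝ} (hc : 0 ≤ c) (ha : c ≤ a) (hba : c ≤ b - a)
    (ha' : c ≤ a') (hba' : c ≤ b' - a') (hsum' : a' + b' ≤ 1) (hb : b ≤ b')
    (hle : a + b ≤ a' + b') :
    giniGamma (lowerC a' b' c) ≤ giniGamma (lowerC a b c) := by
  have hsum : a + b ≤ 1 := hle.trans hsum'
  have hcont := continuous_uncurry_lowerC
  have hdiag : ∫ u in (0 : ℝ)..1, lowerC a' b' c u u ≤ ∫ u in (0 : ℝ)..1, lowerC a b c u u := by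
    refine integral_mono zero_le_one (intervalIntegrable_diag (hcont a' b' c) 0 1)
      (intervalIntegrable_diag (hcont a b c) 0 1) fun u => ?_
    simp only [lowerC_diag hba' hsum', lowerC_diag hba hsum]
    gcongr
  have hantidiag : ∫ u in (0 : ℝ)..1, lowerC a' b' c u (1 - u) ≤
      ∫ u in (0 : ℝ)..1, lowerC a b c u (1 - u) := by
    rw [integral_lowerC_antidiag hc ha' (by linarith) hsum',
      integral_lowerC_antidiag hc ha (by linarith) hsum]
    exact mul_le_mul_of_nonneg_left (by linarith) hc
  rw [giniGamma_eq_integral_add_integral (hcont a' b' c),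
    giniGamma_eq_integral_add_integral (hcont a b c)]
  linarith

theorem giniGamma_lowerC_vertex (hc : 0 ≤ c) (hc' : c ≤ 1 / 3) :
    giniGamma (lowerC c (1 - c) c) = 4 * c ^ 2 - 1 + (4 * c - 1)⁺ ^ 2 := by
  rw [giniGamma_lowerC hc le_rfl (by linarith) (by linarith),
    posPart_of_nonpos (by linarith : 1 + c - 2 * (1 - c) ≤ 0)]
  ring_nf

theorem giniGamma_lowerC_vertex_le (hc : 0 ≤ c) (ha : c ≤ a) (hba : c ≤ b - a)
    (hsum : a + b ≤ 1) : giniGamma (lowerC c (1 - c) c) ≤ giniGamma (lowerC a b c) :=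
  giniGamma_lowerC_anti hc ha hba le_rfl (by linarith) (by linarith) (by linarith) (by linarith)

lemma giniGamma_lowerC_vertex_of_le_quarter (hc : 0 ≤ c) (h : c ≤ 1 / 4) :
    giniGamma (lowerC c (1 - c) c) = 4 * c ^ 2 - 1 := by
  rw [giniGamma_lowerC_vertex hc (by linarith), posPart_of_nonpos (by linarith : 4 * c - 1 ≤ 0)]
  ring

lemma giniGamma_lowerC_vertex_of_quarter_le (h : 1 / 4 ≤ c) (hc : c ≤ 1 / 3) :
    giniGamma (lowerC c (1 - c) c) = 20 * c ^ 2 - 8 * c := by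
  rw [giniGamma_lowerC_vertex (by linarith) hc, posPart_of_nonneg (by linarith : 0 ≤ 4 * c - 1)]
  ring

end LowerBound

section UpperBound

variable {a b c : ℝ}

lemma upperC_diag_eq_tent (hc : 0 ≤ c) (hab : a ≤ b) (u : ℝ) :
    upperC a b c u u = u - (tent (a - c) (b + c) u - tent a b u) := by
  rw [tent_sub_tent_eq_trapezoid hc, upperC, min_eq_left hab, posPart_def]
  grind

lemma upperC_antidiag (hab : a ≤ b) (hsum : a + b ≤ 1) (u : ℝ) :
    upperC a b c u (1 - u) =
      min (min u (1 - u)) (max (max (1 - u - c) (u - (b - a) - c)) (1 - b - c)) := by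
  rw [upperC, min_eq_left hab]
  grind

/-- The horizontal branch `1 - b - c` cuts the tent over `[1 - b - c, b + c]` off the top of the
tent over `[0, 1]`; the branches `1 - u - c` and `u - (b - a) - c` give back one tent on either
side. -/
lemma upperC_antidiag_eq_tent (hc : 0 ≤ c) (hab : a ≤ b) (hsum : a + b ≤ 1) {u : ℝ}
    (hu : u ∈ Icc 0 1) :
    upperC a b c u (1 - u) =
      tent 0 1 u - tent (1 - b - c) (b + c) u
        + (tent (1 - b - c) b u + tent (1 - a) (b + c) u) := by
  obtain ⟨hu₀, hu₁⟩ := hu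
  rw [upperC_antidiag hab hsum]
  simp only [tent, posPart_def]
  grind

lemma integral_upperC_diag (hc : 0 ≤ c) (ha : c ≤ a) (hab : a ≤ b) (hb : b + c ≤ 1) :
    ∫ u in (0 : ℝ)..1, upperC a b c u u = 1 / 2 - c * (b - a + c) := by
  simp_rw [upperC_diag_eq_tent hc hab]
  rw [integral_sub intervalIntegrable_id
      ((intervalIntegrable_tent _ _ 0 1).sub (intervalIntegrable_tent _ _ 0 1)),
    integral_id, integral_tent_sub_tent hc (by linarith) (by linarith) hb]
  ring

lemma integral_upperC_antidiag (hc : 0 ≤ c) (ha : c ≤ a) (hab : a ≤ b) (hsum : a + b ≤ 1) :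
    ∫ u in (0 : ℝ)..1, upperC a b c u (1 - u) =
      (1 - (2 * b + 2 * c - 1)⁺ ^ 2 + (2 * b + c - 1)⁺ ^ 2 + (a + b + c - 1)⁺ ^ 2) / 4 := by
  have hint (p q : ℝ) := intervalIntegrable_tent p q 0 1
  have hcongr : ∫ u in (0 : ℝ)..1, upperC a b c u (1 - u) = ∫ u in (0 : ℝ)..1,
      (tent 0 1 u - tent (1 - b - c) (b + c) u
        + (tent (1 - b - c) b u + tent (1 - a) (b + c) u)) :=
    integral_congr fun u hu =>
      upperC_antidiag_eq_tent hc hab hsum (by rwa [uIcc_of_le zero_le_one] at hu)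
  rw [hcongr, integral_add ((hint _ _).sub (hint _ _)) ((hint _ _).add (hint _ _)),
    integral_sub (hint _ _) (hint _ _), integral_add (hint _ _) (hint _ _),
    integral_tent le_rfl le_rfl, integral_tent (by linarith) (by linarith),
    integral_tent (by linarith) (by linarith), integral_tent (by linarith) (by linarith),
    posPart_of_nonneg (by norm_num : (0 : ℝ) ≤ 1 - 0)]
  ring_nf

theorem giniGamma_upperC (hc : 0 ≤ c) (ha : c ≤ a) (hab : a ≤ b) (hsum : a + b ≤ 1) :
    giniGamma (upperC a b c) =
      1 - 4 * c * (b - a + c) - (2 * b + 2 * c - 1)⁺ ^ 2 + (2 * b + c - 1)⁺ ^ 2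
        + (a + b + c - 1)⁺ ^ 2 := by
  rw [giniGamma_eq_integral_add_integral (continuous_uncurry_upperC a b c),
    integral_upperC_diag hc ha hab (by linarith), integral_upperC_antidiag hc ha hab hsum]
  ring

theorem giniGamma_upperC_anti {a' b' : ℝ} (hc : 0 ≤ c) (ha : c ≤ a) (hab : a ≤ b)
    (hsum : a + b ≤ 1) (ha' : c ≤ a') (hsum' : a' + b' ≤ 1) (hb : b ≤ b')
    (hdiff : b - a ≤ b' - a') :
    giniGamma (upperC a' b' c) ≤ giniGamma (upperC a b c) := by
  have hab' : a' ≤ b' := by linarith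
  have hcont := continuous_uncurry_upperC
  have hdiag : ∫ u in (0 : ℝ)..1, upperC a' b' c u u ≤ ∫ u in (0 : ℝ)..1, upperC a b c u u := by
    rw [integral_upperC_diag hc ha' hab' (by linarith),
      integral_upperC_diag hc ha hab (by linarith)]
    gcongr
  have hantidiag : ∫ u in (0 : ℝ)..1, upperC a' b' c u (1 - u) ≤
      ∫ u in (0 : ℝ)..1, upperC a b c u (1 - u) := by
    refine integral_mono zero_le_one (intervalIntegrable_antidiag (hcont a' b' c) 0 1)
      (intervalIntegrable_antidiag (hcont a b c) 0 1) fun u => ?_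
    simp only [upperC_antidiag hab' hsum', upperC_antidiag hab hsum]
    gcongr
  rw [giniGamma_eq_integral_add_integral (hcont a' b' c),
    giniGamma_eq_integral_add_integral (hcont a b c)]
  linarith

theorem giniGamma_upperC_vertex (hc : 0 ≤ c) (hc' : c ≤ 1 / 3) :
    giniGamma (upperC c (2 * c) c) =
      1 - 8 * c ^ 2 - (6 * c - 1)⁺ ^ 2 + (5 * c - 1)⁺ ^ 2 + (4 * c - 1)⁺ ^ 2 := by
  rw [giniGamma_upperC hc le_rfl (by linarith) (by linarith)]
  ring_nf

theorem giniGamma_upperC_le_vertex (hc : 0 ≤ c) (ha : c ≤ a) (hba : c ≤ b - a)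
    (hsum : a + b ≤ 1) : giniGamma (upperC a b c) ≤ giniGamma (upperC c (2 * c) c) :=
  giniGamma_upperC_anti hc le_rfl (by linarith) (by linarith) ha hsum (by linarith) (by linarith)

lemma giniGamma_upperC_vertex_of_le_sixth (hc : 0 ≤ c) (h : c ≤ 1 / 6) :
    giniGamma (upperC c (2 * c) c) = 1 - 8 * c ^ 2 := by
  rw [giniGamma_upperC_vertex hc (by linarith),
    posPart_of_nonpos (by linarith : 6 * c - 1 ≤ 0),
    posPart_of_nonpos (by linarith : 5 * c - 1 ≤ 0),
    posPart_of_nonpos (by linarith : 4 * c - 1 ≤ 0)]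
  ring

lemma giniGamma_upperC_vertex_of_sixth_le_of_le_fifth (h : 1 / 6 ≤ c) (h' : c ≤ 1 / 5) :
    giniGamma (upperC c (2 * c) c) = 12 * c - 44 * c ^ 2 := by
  rw [giniGamma_upperC_vertex (by linarith) (by linarith),
    posPart_of_nonneg (by linarith : 0 ≤ 6 * c - 1),
    posPart_of_nonpos (by linarith : 5 * c - 1 ≤ 0),
    posPart_of_nonpos (by linarith : 4 * c - 1 ≤ 0)]
  ring

lemma giniGamma_upperC_vertex_of_fifth_le_of_le_quarter (h : 1 / 5 ≤ c) (h' : c ≤ 1 / 4) :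
    giniGamma (upperC c (2 * c) c) = 1 + 2 * c - 19 * c ^ 2 := by
  rw [giniGamma_upperC_vertex (by linarith) (by linarith),
    posPart_of_nonneg (by linarith : 0 ≤ 6 * c - 1),
    posPart_of_nonneg (by linarith : 0 ≤ 5 * c - 1),
    posPart_of_nonpos (by linarith : 4 * c - 1 ≤ 0)]
  ring

lemma giniGamma_upperC_vertex_of_quarter_le (h : 1 / 4 ≤ c) (hc : c ≤ 1 / 3) :
    giniGamma (upperC c (2 * c) c) = 2 - 6 * c - 3 * c ^ 2 := by
  rw [giniGamma_upperC_vertex (by linarith) hc,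
    posPart_of_nonneg (by linarith : 0 ≤ 6 * c - 1),
    posPart_of_nonneg (by linarith : 0 ≤ 5 * c - 1),
    posPart_of_nonneg (by linarith : 0 ≤ 4 * c - 1)]
  ring

end UpperBound

theorem gamma_bounds_on_triangle (m : ℝ) (hm : m ∈ Set.Icc (0:ℝ) (1/3)) :
    (∀ a b : ℝ, a ∈ Set.Icc (0:ℝ) 1 → b ∈ Set.Icc (0:ℝ) 1 →
      m ≤ a → m ≤ b - a → a + b ≤ 1 →
      ((m ≤ 1/4 → 4 * m^2 - 1 ≤ giniGamma (lowerC a b m)) ∧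
       (1/4 ≤ m → 20 * m^2 - 8 * m ≤ giniGamma (lowerC a b m)) ∧
       (m ≤ 1/6 → giniGamma (upperC a b m) ≤ 1 - 8 * m^2) ∧
       (1/6 ≤ m → m ≤ 1/5 → giniGamma (upperC a b m) ≤ 12 * m - 44 * m^2) ∧
       (1/5 ≤ m → m ≤ 1/4 → giniGamma (upperC a b m) ≤ 1 + 2 * m - 19 * m^2) ∧
       (1/4 ≤ m → giniGamma (upperC a b m) ≤ 2 - 6 * m - 3 * m^2))) ∧
    (m ≤ 1/4 → giniGamma (lowerC m (1 - m) m) = 4 * m^2 - 1) ∧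
    (1/4 ≤ m → giniGamma (lowerC m (1 - m) m) = 20 * m^2 - 8 * m) ∧
    (m ≤ 1/6 → giniGamma (upperC m (2 * m) m) = 1 - 8 * m^2) ∧
    (1/6 ≤ m → m ≤ 1/5 → giniGamma (upperC m (2 * m) m) = 12 * m - 44 * m^2) ∧
    (1/5 ≤ m → m ≤ 1/4 → giniGamma (upperC m (2 * m) m) = 1 + 2 * m - 19 * m^2) ∧
    (1/4 ≤ m → giniGamma (upperC m (2 * m) m) = 2 - 6 * m - 3 * m^2) := by
  obtain ⟨hm₀, hm₃⟩ := hm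
  have hlower₁ := giniGamma_lowerC_vertex_of_le_quarter hm₀
  have hlower₂ (h : 1 / 4 ≤ m) := giniGamma_lowerC_vertex_of_quarter_le h hm₃
  have hupper₁ := giniGamma_upperC_vertex_of_le_sixth hm₀
  have hupper₂ := giniGamma_upperC_vertex_of_sixth_le_of_le_fifth (c := m)
  have hupper₃ := giniGamma_upperC_vertex_of_fifth_le_of_le_quarter (c := m)
  have hupper₄ (h : 1 / 4 ≤ m) := giniGamma_upperC_vertex_of_quarter_le h hm₃
  refine ⟨fun a b _ _ ha hba hab => ?_, hlower₁, hlower₂, hupper₁, hupper₂, hupper₃, hupper₄⟩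
  have hmin := giniGamma_lowerC_vertex_le hm₀ ha hba hab
  have hmax := giniGamma_upperC_le_vertex hm₀ ha hba hab
  exact ⟨fun h => (hlower₁ h).symm.trans_le hmin, fun h => (hlower₂ h).symm.trans_le hmin,
    fun h => hmax.trans_eq (hupper₁ h), fun h h' => hmax.trans_eq (hupper₂ h h'),
    fun h h' => hmax.trans_eq (hupper₃ h h'), fun h => hmax.trans_eq (hupper₄ h)⟩
end
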